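/- (Forward Substitution Lemma, case 2.) If there are derivations (Γ, x:ᾱ);(Δ, x:⋃Δ') ⊢ M : β and Γ';Δ' ⊢! N : ᾱ in the multi-type system for the λI-calculus, where ᾱ is a non-empty multiset type and Δ ≍ Δ', then there is a derivation (Γ + Γ');(Δ ∨ Δ') ⊢ M[N/x] : β. -/

import Mathlib

set_option maxHeartbeats 1000000

/-! # λ-terms (named variables over ℕ) -/

inductive Lam : Type
  | var : ℕ → Lam
  | app : Lam → Lam → Lam
  | lam : ℕ → Lam → Lam
deriving DecidableEq

namespace Lam

/-- Free variables of a λ-term. -/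
def fv : Lam → Finset ℕ
  | var x => {x}
  | app M N => M.fv ∪ N.fv
  | lam x M => M.fv.erase x

/-- λI-terms: every abstraction `λx.M` satisfies `x ∈ fv M`. -/
def IsI : Lam → Prop
  | var _ => True
  | app M N => M.IsI ∧ N.IsI
  | lam x M => x ∈ M.fv ∧ M.IsI

/-- A variable not belonging to a given finite set. -/
def freshVar (s : Finset ℕ) : ℕ := (s.sup id) + 1

/-- Capture-avoiding simultaneous substitution (bound variables are freshened). -/
def substF : Lam → (ℕ → Lam) → Lam
  | var x, σ => σ x
  | app M N, σ => app (M.substF σ) (N.substF σ)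
  | lam x M, σ =>
      let y := freshVar ((M.fv.erase x).biUnion fun z => (σ z).fv)
      lam y (M.substF (Function.update σ x (var y)))

/-- Capture-avoiding substitution `M[N/x]`. -/
def subst (M : Lam) (x : ℕ) (N : Lam) : Lam :=
  M.substF fun z => if z = x then N else var z

/-- Being an abstraction. -/
def isAbs : Lam → Prop
  | lam _ _ => True
  | _ => False

end Lam

/-- One-step β-reduction. -/
inductive Beta : Lam → Lam → Prop
  | beta (x : ℕ) (M N : Lam) : Beta (.app (.lam x M) N) (M.subst x N)
  | appL {M M' : Lam} (N : Lam) : Beta M M' → Beta (.app M N) (.app M' N)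
  | appR {N N' : Lam} (M : Lam) : Beta N N' → Beta (.app M N) (.app M N')
  | lam (x : ℕ) {M M' : Lam} : Beta M M' → Beta (.lam x M) (.lam x M')

/-- One-step head reduction. -/
inductive Head : Lam → Lam → Prop
  | beta (x : ℕ) (M N : Lam) : Head (.app (.lam x M) N) (M.subst x N)
  | app {M M' : Lam} (N : Lam) : ¬ M.isAbs → Head M M' → Head (.app M N) (.app M' N)
  | lam (x : ℕ) {M M' : Lam} : Head M M' → Head (.lam x M) (.lam x M')

/-- Iterated head reduction. -/
def HeadStar : Lam → Lam → Prop := Relation.ReflTransGen Head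

/-- Terms of the shape `y M₁ ⋯ Mₖ`. -/
inductive Neutral : Lam → Prop
  | var (x : ℕ) : Neutral (.var x)
  | app {M : Lam} (N : Lam) : Neutral M → Neutral (.app M N)

/-- Head normal forms `λx₁…xₙ.y M₁ ⋯ Mₖ`. -/
inductive Hnf : Lam → Prop
  | neutral {M : Lam} : Neutral M → Hnf M
  | lam (x : ℕ) {M : Lam} : Hnf M → Hnf (.lam x M)

/-- `M` has a head normal form. -/
def HasHnf (M : Lam) : Prop := ∃ H, HeadStar M H ∧ Hnf H

/-! # Multi-types -/

/-- Simple types: atoms `a ∈ ℕ`, arrows `[]_X → β` and `[α₀,…,αₙ] → β`. -/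
inductive STy : Type
  | atom : ℕ → STy
  | arr0 : Finset ℕ → STy → STy
  | arrP : STy → List STy → STy → STy

/-- Multiset types: the annotated empty multiset `[]_X` or a
non-empty multiset `[α₀,…,αₙ]` (head plus tail). -/
inductive MTy : Type
  | empty : Finset ℕ → MTy
  | mk : STy → List STy → MTy

/-- The arrow type `ᾱ → β`. -/
def MTy.arr : MTy → STy → STy
  | .empty X, β => .arr0 X β
  | .mk α l, β => .arrP α l β

/-- The underlying multiset of simple types of a multiset type. -/
def MTy.toM : MTy → Multiset STy
  | .empty _ => 0
  | .mk α l => α ::ₘ (l : Multiset STy)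

/-- Multi-types: `σ ::= e_X | α`. -/
inductive OTy : Type
  | esum : Finset ℕ → OTy
  | simple : STy → OTy

mutual
/-- Atoms occurring in a simple type. -/
def STy.atoms : STy → Finset ℕ
  | .atom a => {a}
  | .arr0 _ β => β.atoms
  | .arrP α l β => α.atoms ∪ STy.atomsL l ∪ β.atoms
def STy.atomsL : List STy → Finset ℕ
  | [] => ∅
  | α :: l => α.atoms ∪ STy.atomsL l
end

/-! # Environments -/

/-- Type environments: finitely supported maps from variables
to finite multisets of simple types; added pointwise. -/
abbrev TEnv := ℕ →₀ Multiset STy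

/-- Variable environments: finite partial maps from variables to finite
sets of variables. -/
abbrev VEnv := Finmap (fun _ : ℕ => Finset ℕ)

namespace VEnv

/-- `⋃Δ`: the union of the values of `Δ`. -/
def uni (Δ : VEnv) : Finset ℕ :=
  Δ.keys.biUnion fun x => (Δ.lookup x).getD ∅

/-- Coherence `Δ₀ ≍ Δ₁`: agreement on the common domain. -/
def Coh (Δ₀ Δ₁ : VEnv) : Prop :=
  ∀ x : ℕ, x ∈ Δ₀ → x ∈ Δ₁ → Δ₀.lookup x = Δ₁.lookup x

end VEnv

/-! # The multi-type system for the λI-calculus -/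

mutual
/-- Typing judgement `Γ; Δ ⊢ M : σ`. -/
inductive Der : TEnv → VEnv → Lam → OTy → Prop
  | esum {Δ : VEnv} {M : Lam} :
      Δ.keys = M.fv → Der 0 Δ M (.esum Δ.uni)
  | ax (x : ℕ) (α : STy) (X : Finset ℕ) :
      Der (Finsupp.single x {α}) (Finmap.singleton x X) (.var x) (.simple α)
  | app {Γ₀ Γ₁ : TEnv} {Δ₀ Δ₁ : VEnv} {M N : Lam} {m : MTy} {β : STy} :
      Der Γ₀ Δ₀ M (.simple (m.arr β)) → DerB Γ₁ Δ₁ N m → VEnv.Coh Δ₀ Δ₁ →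
      Der (Γ₀ + Γ₁) (Δ₀ ∪ Δ₁) (.app M N) (.simple β)
  | lam0 {Γ : TEnv} {Δ : VEnv} {x : ℕ} {X : Finset ℕ} {M : Lam} {β : STy} :
      Γ x = 0 → x ∉ Δ → Der Γ (Δ.insert x X) M (.simple β) →
      Der Γ Δ (.lam x M) (.simple (.arr0 X β))
  | lamP {Γ : TEnv} {Δ : VEnv} {x : ℕ} {X : Finset ℕ} {M : Lam} {α : STy}
      {l : List STy} {β : STy} :
      Γ x = 0 → x ∉ Δ →
      Der (Γ + Finsupp.single x (MTy.mk α l).toM) (Δ.insert x X) M (.simple β) →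
      Der Γ Δ (.lam x M) (.simple (.arrP α l β))

/-- Typing judgement `Γ; Δ ⊢! M : ᾱ`. -/
inductive DerB : TEnv → VEnv → Lam → MTy → Prop
  | bang0 {Δ : VEnv} {M : Lam} :
      Δ.keys = M.fv → DerB 0 Δ M (.empty Δ.uni)
  | one {Γ : TEnv} {Δ : VEnv} {M : Lam} {α : STy} :
      Der Γ Δ M (.simple α) → DerB Γ Δ M (.mk α [])
  | cons {Γ₀ Γ₁ : TEnv} {Δ : VEnv} {M : Lam} {α α' : STy} {l : List STy} :
      Der Γ₀ Δ M (.simple α) → DerB Γ₁ Δ M (.mk α' l) →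
      DerB (Γ₀ + Γ₁) Δ M (.mk α (α' :: l))
end

/-- The multi-type interpretation `⟦M⟧`. -/
def interp (M : Lam) : Set (TEnv × VEnv × OTy) :=
  { p | Der p.1 p.2.1 M p.2.2 }

/-! # Ohana trees (coinductive equality, as a greatest fixpoint) -/

/-- Matching of the spines `y M₁ ⋯ Mₖ` of two head normal forms:
same head variable, same number of arguments, arguments related by `R`. -/
inductive SpineMatch (R : Lam → Lam → Prop) : Lam → Lam → Prop
  | var (y : ℕ) : SpineMatch R (.var y) (.var y)
  | app {P Q M N : Lam} : SpineMatch R P Q → R M N →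
      SpineMatch R (.app P M) (.app Q N)

/-- Matching of two head normal forms, comparing abstraction prefixes
up to renaming of the bound variables. -/
inductive HnfMatch (R : Lam → Lam → Prop) : Lam → Lam → Prop
  | base {P Q : Lam} : SpineMatch R P Q → HnfMatch R P Q
  | lam {x y : ℕ} {P Q : Lam} :
      (∀ z : ℕ, z ∉ (P.fv.erase x ∪ Q.fv.erase y) →
        HnfMatch R (P.subst x (.var z)) (Q.subst y (.var z))) →
      HnfMatch R (.lam x P) (.lam y Q)

/-- `R` is an Ohana-tree bisimulation. -/
def OTBisim (R : Lam → Lam → Prop) : Prop :=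
  ∀ M N, R M N →
    (¬ HasHnf M ∧ ¬ HasHnf N ∧ M.fv = N.fv) ∨
    (∃ P Q, HeadStar M P ∧ HeadStar N Q ∧ Hnf P ∧ Hnf Q ∧ HnfMatch R P Q)

/-- Equality of Ohana trees: `OT(M) = OT(N)`. -/
def OTEq (M N : Lam) : Prop := ∃ R, OTBisim R ∧ R M N

/-! # λI-resource terms -/

mutual
inductive RTm : Type
  | var : ℕ → RTm
  | lam : ℕ → RTm → RTm
  | app : RTm → RBag → RTm
inductive RBag : Type
  | empty : Finset ℕ → RBag
  | mk : RTm → List RTm → RBag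
end

noncomputable instance : DecidableEq RTm := fun _ _ => Classical.dec _
noncomputable instance : DecidableEq RBag := fun _ _ => Classical.dec _

mutual
/-- Free variables of a resource term. -/
def RTm.fv : RTm → Finset ℕ
  | .var x => {x}
  | .lam x s => s.fv.erase x
  | .app s b => s.fv ∪ b.fv
/-- Free variables of a bag. -/
def RBag.fv : RBag → Finset ℕ
  | .empty X => X
  | .mk h t => h.fv ∪ RTm.fvL t
/-- Free variables of a list of resource terms. -/
def RTm.fvL : List RTm → Finset ℕ
  | [] => ∅
  | h :: t => h.fv ∪ RTm.fvL t
end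

mutual
/-- λI-resource terms: in every abstraction `λx.s`, `x` occurs free in `s`. -/
inductive RTm.IsIr : RTm → Prop
  | var (x : ℕ) : RTm.IsIr (.var x)
  | lam {x : ℕ} {s : RTm} : x ∈ s.fv → RTm.IsIr s → RTm.IsIr (.lam x s)
  | app {s : RTm} {b : RBag} : RTm.IsIr s → RBag.IsIr b → RTm.IsIr (.app s b)
inductive RBag.IsIr : RBag → Prop
  | empty (X : Finset ℕ) : RBag.IsIr (.empty X)
  | mk {h : RTm} {t : List RTm} : RTm.IsIr h → (∀ u ∈ t, RTm.IsIr u) →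
      RBag.IsIr (.mk h t)
end

/-- The list of elements of a bag. -/
def RBag.toList : RBag → List RTm
  | .empty _ => []
  | .mk h t => h :: t

/-! Linear (bijective) substitution: `LSub s x ts t` means that `t` is obtained
by substituting the elements of the list `ts` for the free occurrences of `x`
in `s`, in left-to-right order (annotations of empty bags absorb). -/
mutual
inductive LSub : RTm → ℕ → List RTm → RTm → Prop
  | var_hit (x : ℕ) (t : RTm) : LSub (.var x) x [t] t
  | var_miss {x y : ℕ} : y ≠ x → LSub (.var y) x [] (.var y)
  | lam {x y : ℕ} {s : RTm} {ts : List RTm} {s' : RTm} :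
      y ≠ x → y ∉ RTm.fvL ts → LSub s x ts s' →
      LSub (.lam y s) x ts (.lam y s')
  | app {s : RTm} {b : RBag} {x : ℕ} {ts₁ ts₂ : List RTm} {s' : RTm} {b' : RBag} :
      LSub s x ts₁ s' → LSubB b x ts₂ b' →
      LSub (.app s b) x (ts₁ ++ ts₂) (.app s' b')
inductive LSubB : RBag → ℕ → List RTm → RBag → Prop
  | empty_hit {X : Finset ℕ} {x : ℕ} {ts : List RTm} :
      x ∈ X → LSubB (.empty X) x ts (.empty ((X.erase x) ∪ RTm.fvL ts))
  | empty_miss {X : Finset ℕ} {x : ℕ} :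
      x ∉ X → LSubB (.empty X) x [] (.empty X)
  | mk {h : RTm} {t : List RTm} {x : ℕ} {ts₁ ts₂ : List RTm} {h' : RTm}
      {t' : List RTm} :
      LSub h x ts₁ h' → LSubL t x ts₂ t' →
      LSubB (.mk h t) x (ts₁ ++ ts₂) (.mk h' t')
inductive LSubL : List RTm → ℕ → List RTm → List RTm → Prop
  | nil (x : ℕ) : LSubL [] x [] []
  | cons {h : RTm} {t : List RTm} {x : ℕ} {ts₁ ts₂ : List RTm} {h' : RTm}
      {t' : List RTm} :
      LSub h x ts₁ h' → LSubL t x ts₂ t' →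
      LSubL (h :: t) x (ts₁ ++ ts₂) (h' :: t')
end

/-- The root resource reduction step `(λx.s)b →r T`:
`T` is the sum of all results of bijective substitution of the elements
of `b` for the free occurrences of `x` in `s`. -/
def RootRed (x : ℕ) (s : RTm) (b : RBag) (T : Finset RTm) : Prop :=
  ∀ u : RTm, u ∈ T ↔ ∃ l : List RTm, l.Perm b.toList ∧ LSub s x l u

/-- Pushing an element on top of a bag. -/
def RBag.push (h : RTm) : RBag → RBag
  | .empty _ => .mk h []
  | .mk h' t => .mk h (h' :: t)

mutual
/-- One-step resource reduction of a term to a finite sum. -/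
inductive RStep : RTm → Finset RTm → Prop
  | root {x : ℕ} {s : RTm} {b : RBag} {T : Finset RTm} :
      RootRed x s b T → RStep (.app (.lam x s) b) T
  | appL {s : RTm} {T : Finset RTm} {b : RBag} :
      RStep s T → RStep (.app s b) (T.image fun s' => .app s' b)
  | appB {s : RTm} {b : RBag} {Tb : Finset RBag} :
      RStepB b Tb → RStep (.app s b) (Tb.image fun b' => .app s b')
  | lam {x : ℕ} {s : RTm} {T : Finset RTm} :
      RStep s T → RStep (.lam x s) (T.image fun s' => .lam x s')
/-- One-step resource reduction inside a bag. -/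
inductive RStepB : RBag → Finset RBag → Prop
  | head {h : RTm} {t : List RTm} {T : Finset RTm} :
      RStep h T → RStepB (.mk h t) (T.image fun h' => .mk h' t)
  | tail {h h₂ : RTm} {t : List RTm} {B : Finset RBag} :
      RStepB (.mk h₂ t) B → RStepB (.mk h (h₂ :: t)) (B.image (RBag.push h))
end

/-- One-step resource reduction on finite sums (linear extension). -/
inductive RRed : Finset RTm → Finset RTm → Prop
  | step {S : Finset RTm} {s : RTm} {T : Finset RTm} :
      s ∈ S → RStep s T → RRed S ((S.erase s) ∪ T)

/-- `→r*`. -/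
def RRedStar : Finset RTm → Finset RTm → Prop := Relation.ReflTransGen RRed

/-! # The resource multi-type system -/

mutual
/-- Resource typing judgement `Γ; Δ ⊢ s : α`. -/
inductive DerR : TEnv → VEnv → RTm → STy → Prop
  | ax (x : ℕ) (α : STy) (X : Finset ℕ) :
      DerR (Finsupp.single x {α}) (Finmap.singleton x X) (.var x) α
  | app {Γ₀ Γ₁ : TEnv} {Δ₀ Δ₁ : VEnv} {s : RTm} {b : RBag} {m : MTy} {β : STy} :
      DerR Γ₀ Δ₀ s (m.arr β) → DerRB Γ₁ Δ₁ b m → VEnv.Coh Δ₀ Δ₁ →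
      DerR (Γ₀ + Γ₁) (Δ₀ ∪ Δ₁) (.app s b) β
  | lam0 {Γ : TEnv} {Δ : VEnv} {x : ℕ} {X : Finset ℕ} {s : RTm} {β : STy} :
      Γ x = 0 → x ∉ Δ → DerR Γ (Δ.insert x X) s β →
      DerR Γ Δ (.lam x s) (.arr0 X β)
  | lamP {Γ : TEnv} {Δ : VEnv} {x : ℕ} {X : Finset ℕ} {s : RTm} {α : STy}
      {l : List STy} {β : STy} :
      Γ x = 0 → x ∉ Δ →
      DerR (Γ + Finsupp.single x (MTy.mk α l).toM) (Δ.insert x X) s β →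
      DerR Γ Δ (.lam x s) (.arrP α l β)
/-- Resource typing judgement `Γ; Δ ⊢! t̄ : ᾱ`. -/
inductive DerRB : TEnv → VEnv → RBag → MTy → Prop
  | bang0 {Δ : VEnv} : DerRB 0 Δ (.empty Δ.keys) (.empty Δ.uni)
  | one {Γ : TEnv} {Δ : VEnv} {t : RTm} {α : STy} :
      DerR Γ Δ t α → DerRB Γ Δ (.mk t []) (.mk α [])
  | cons {Γ₀ Γ₁ : TEnv} {Δ : VEnv} {t t' : RTm} {l : List RTm} {α α' : STy}
      {la : List STy} :
      DerR Γ₀ Δ t α → DerRB Γ₁ Δ (.mk t' l) (.mk α' la) →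
      DerRB (Γ₀ + Γ₁) Δ (.mk t (t' :: l)) (.mk α (α' :: la))
end

/-! # Taylor expansion -/

/-- `Taylor M s`: the resource term `s` belongs to the Taylor expansion `T(M)`. -/
inductive Taylor : Lam → RTm → Prop
  | var (x : ℕ) : Taylor (.var x) (.var x)
  | lam {M : Lam} {s : RTm} (x : ℕ) : Taylor M s → Taylor (.lam x M) (.lam x s)
  | app0 {M N : Lam} {s : RTm} : Taylor M s →
      Taylor (.app M N) (.app s (.empty N.fv))
  | appP {M N : Lam} {s t : RTm} {l : List RTm} :
      Taylor M s → Taylor N t → (∀ u ∈ l, Taylor N u) →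
      Taylor (.app M N) (.app s (.mk t l))

/-! # Miscellaneous constructions for the last statement -/

/-- The variable environment `Δ_id` mapping each `x ∈ s` to `{x}`. -/
def idEnv (s : Finset ℕ) : VEnv :=
  (s.sort (· ≤ ·)).foldr (fun x Δ => Δ.insert x ({x} : Finset ℕ)) ∅

/-- The term `y M₁ ⋯ Mₖ`. -/
def Lam.spineApp (y : ℕ) (l : List Lam) : Lam := l.foldl .app (.var y)

/-- The type `[]_{fv N₁} → ⋯ → []_{fv Nₖ} → a`. -/
def yTyRest (a : ℕ) : List Lam → STy
  | [] => .atom a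
  | N :: l => .arr0 N.fv (yTyRest a l)

/-- The type `[]_{fv M₁} → ⋯ → [α] → ⋯ → []_{fv Mₖ} → a`, with `[α]`
in the `i`-th argument position (0-based). -/
def yTy (α : STy) (a : ℕ) : List Lam → ℕ → STy
  | [], _ => .atom a
  | _ :: l, 0 => .arrP α [] (yTyRest a l)
  | N :: l, (i+1) => .arr0 N.fv (yTy α a l i)

/-- Bags of derivations. -/
inductive SLBag (P : TEnv → STy → Prop) : TEnv → Multiset STy → Prop
  | nil : SLBag P 0 0
  | cons {G H : TEnv} {α : STy} {m : Multiset STy} : P G α → SLBag P H m →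
      SLBag P (G + H) (α ::ₘ m)

/-- Families of derivations indexed by a type environment. -/
inductive SLSb (P : ℕ → TEnv → STy → Prop) : TEnv → TEnv → Prop
  | nil : SLSb P 0 0
  | cons {z : ℕ} {α : STy} {G Γ H : TEnv} : P z G α → SLSb P Γ H →
      SLSb P (Finsupp.single z {α} + Γ) (G + H)

/-- Typing with respect to a total variable environment. -/
def SLD : Lam → (ℕ → Finset ℕ) → TEnv → STy → Prop
  | .var x, _, Γ, α => Γ = Finsupp.single x {α}
  | .app M N, E, Γ, β => ∃ Γ₀ Γ₁, Γ = Γ₀ + Γ₁ ∧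
      ((SLD M E Γ₀ (.arr0 (N.fv.biUnion E) β) ∧ Γ₁ = 0) ∨
        ∃ α l, SLD M E Γ₀ (.arrP α l β) ∧ SLBag (SLD N E) Γ₁ (MTy.mk α l).toM)
  | .lam x M, E, Γ, τ => x ∈ M.fv ∧ Γ x = 0 ∧
      ((∃ X β, τ = .arr0 X β ∧ SLD M (Function.update E x X) Γ β) ∨
        ∃ X α l β, τ = .arrP α l β ∧
          SLD M (Function.update E x X) (Γ + Finsupp.single x (MTy.mk α l).toM) β)

theorem SLBag.imp {P Q : TEnv → STy → Prop} (h : ∀ G α, P G α → Q G α) {G m}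
    (hb : SLBag P G m) : SLBag Q G m := by
  induction hb with
  | nil => exact .nil
  | cons h1 _ ih => exact .cons (h _ _ h1) ih

theorem SLBag.zero {P : TEnv → STy → Prop} {z : ℕ} (h : ∀ G α, P G α → G z = 0) {G m}
    (hb : SLBag P G m) : G z = 0 := by
  induction hb with
  | nil => rfl
  | cons h1 _ ih => simp [h _ _ h1, ih]

theorem SLSb.imp {P Q : ℕ → TEnv → STy → Prop} {Γ H} (hb : SLSb P Γ H)
    (h : ∀ z G α, Γ z ≠ 0 → P z G α → Q z G α) : SLSb Q Γ H := by
  induction hb with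
  | nil => exact .nil
  | cons h1 _ ih =>
    refine .cons (h _ _ _ (by simp) h1) (ih fun z G α hz => h z G α ?_)
    simp [hz]

theorem SLSb.zero {P : ℕ → TEnv → STy → Prop} {y : ℕ} {Γ H} (hb : SLSb P Γ H)
    (h : ∀ z G α, Γ z ≠ 0 → P z G α → G y = 0) : H y = 0 := by
  induction hb with
  | nil => rfl
  | cons h1 _ ih =>
    have := h _ _ _ (by simp) h1
    have := ih fun z G α hz => h z G α (by simp [hz])
    simp [*]

theorem SLSb.add {P : ℕ → TEnv → STy → Prop} {Γ H Γ' H'} (hb : SLSb P Γ H)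
    (hb' : SLSb P Γ' H') : SLSb P (Γ + Γ') (H + H') := by
  induction hb with
  | nil => simpa
  | cons h1 _ ih => simpa only [add_assoc] using SLSb.cons h1 ih

theorem SLSb.of_bag {P : ℕ → TEnv → STy → Prop} {z : ℕ} {H m} (hb : SLBag (P z) H m) :
    SLSb P (Finsupp.single z m) H := by
  induction hb with
  | nil => simpa using SLSb.nil
  | cons h1 _ ih =>
    have := SLSb.cons h1 ih
    rwa [← Finsupp.single_add, Multiset.singleton_add] at this

theorem SLSb.vars {P : ℕ → TEnv → STy → Prop} (Γ : TEnv)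
    (h : ∀ z α, Γ z ≠ 0 → P z (Finsupp.single z {α}) α) : SLSb P Γ Γ := by
  have key : ∀ Γ' : TEnv, SLSb (fun z G α => G = Finsupp.single z {α}) Γ' Γ' := by
    intro Γ'
    induction Γ' using Finsupp.induction_linear with
    | zero => exact .nil
    | add f g hf hg => exact hf.add hg
    | single z m =>
      refine SLSb.of_bag ?_
      induction m using Multiset.induction with
      | empty => simpa using SLBag.nil
      | cons a m ih =>
        rw [← Multiset.singleton_add, Finsupp.single_add, Multiset.singleton_add]
        exact .cons rfl ih
  refine (key Γ).imp ?_
  rintro z G α hz rfl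
  exact h z α hz

theorem SLSb.split {P : ℕ → TEnv → STy → Prop} {Γ H} (hb : SLSb P Γ H) :
    ∀ Γ₀ Γ₁, Γ = Γ₀ + Γ₁ → ∃ H₀ H₁, H = H₀ + H₁ ∧ SLSb P Γ₀ H₀ ∧ SLSb P Γ₁ H₁ := by
  induction hb with
  | nil =>
    intro Γ₀ Γ₁ h
    have h0 : Γ₀ = 0 := by
      ext1 z
      have := DFunLike.congr_fun h z
      simp only [Finsupp.coe_zero, Pi.zero_apply, Finsupp.add_apply] at this
      exact (add_eq_zero.1 this.symm).1
    subst h0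
    rw [zero_add] at h
    subst h
    exact ⟨0, 0, by simp, .nil, .nil⟩
  | @cons z α G Γ H h1 _ ih =>
    have hsub : ∀ Δ : TEnv, α ∈ Δ z → ∃ Δ', Δ = Finsupp.single z {α} + Δ' := by
      intro Δ hα
      obtain ⟨m, hm⟩ := Multiset.exists_cons_of_mem hα
      refine ⟨Δ.update z m, ?_⟩
      ext1 w
      by_cases hw : w = z
      · subst hw
        simp [hm, Multiset.singleton_add]
      · simp [Finsupp.single_apply, hw, Ne.symm hw, Function.update_of_ne hw]
    intro Γ₀ Γ₁ h
    have hα : α ∈ Γ₀ z + Γ₁ z := by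
      rw [← Finsupp.add_apply, ← h]
      simp
    rcases Multiset.mem_add.1 hα with hα | hα
    · obtain ⟨Γ', rfl⟩ := hsub _ hα
      rw [add_assoc] at h
      obtain ⟨H₀, H₁, rfl, a, b⟩ := ih _ _ (add_left_cancel h)
      exact ⟨G + H₀, H₁, by rw [add_assoc], .cons h1 a, b⟩
    · obtain ⟨Γ', rfl⟩ := hsub _ hα
      rw [add_left_comm] at h
      obtain ⟨H₀, H₁, rfl, a, b⟩ := ih _ _ (add_left_cancel h)
      exact ⟨H₀, G + H₁, by rw [add_left_comm], a, .cons h1 b⟩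

theorem SLSb.eq_zero {P : ℕ → TEnv → STy → Prop} {Γ H} (hb : SLSb P Γ H) (h : Γ = 0) :
    H = 0 := by
  cases hb with
  | nil => rfl
  | @cons z α G Γ H h1 _ =>
    have := DFunLike.congr_fun h z
    simp at this

theorem SLD.supp {M : Lam} : ∀ {E Γ β z}, SLD M E Γ β → z ∉ M.fv → Γ z = 0 := by
  induction M with
  | var x =>
    intro E Γ β z h hz
    simp only [SLD] at h
    subst h
    simp only [Lam.fv, Finset.mem_singleton] at hz
    simp [Finsupp.single_apply, Ne.symm hz]
  | app M N ihM ihN =>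
    intro E Γ β z h hz
    simp only [Lam.fv, Finset.mem_union, not_or] at hz
    obtain ⟨Γ₀, Γ₁, rfl, ⟨h, rfl⟩ | ⟨α, l, h, hb⟩⟩ := h
    · simp [ihM h hz.1]
    · simp [ihM h hz.1, hb.zero fun G α h => ihN h hz.2]
  | lam x M ih =>
    intro E Γ β z h hz
    obtain ⟨hx, h0, h⟩ := h
    by_cases hzx : z = x
    · rw [hzx, h0]
    have hz' : z ∉ M.fv := by simpa [Lam.fv, hzx] using hz
    obtain ⟨X, β, rfl, h⟩ | ⟨X, α, l, β, rfl, h⟩ := h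
    · exact ih h hz'
    · have := ih h hz'
      simpa [Finsupp.single_apply, Ne.symm hzx] using this

theorem SLD.congr {M : Lam} : ∀ {E E' Γ β}, (∀ z ∈ M.fv, E z = E' z) → SLD M E Γ β →
    SLD M E' Γ β := by
  induction M with
  | var x => intro E E' Γ β _ h; exact h
  | app M N ihM ihN =>
    intro E E' Γ β hE h
    have hM : ∀ z ∈ M.fv, E z = E' z := fun z hz => hE z (by simp [Lam.fv, hz])
    have hN : ∀ z ∈ N.fv, E z = E' z := fun z hz => hE z (by simp [Lam.fv, hz])
    obtain ⟨Γ₀, Γ₁, rfl, ⟨h, rfl⟩ | ⟨α, l, h, hb⟩⟩ := h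
    · refine ⟨Γ₀, 0, rfl, .inl ⟨?_, rfl⟩⟩
      rw [← Finset.biUnion_congr rfl hN]
      exact ihM hM h
    · exact ⟨Γ₀, Γ₁, rfl, .inr ⟨α, l, ihM hM h, hb.imp fun G α h => ihN hN h⟩⟩
  | lam x M ih =>
    intro E E' Γ β hE h
    obtain ⟨hx, h0, h⟩ := h
    have hM : ∀ X, ∀ z ∈ M.fv, Function.update E x X z = Function.update E' x X z := by
      intro X z hz
      by_cases hzx : z = x
      · subst hzx; simp
      · simp only [Function.update_of_ne hzx]
        exact hE z (by simp [Lam.fv, hz, hzx])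
    obtain ⟨X, β, rfl, h⟩ | ⟨X, α, l, β, rfl, h⟩ := h
    · exact ⟨hx, h0, .inl ⟨X, β, rfl, ih (hM X) h⟩⟩
    · exact ⟨hx, h0, .inr ⟨X, α, l, β, rfl, ih (hM X) h⟩⟩

theorem SL_fresh (s : Finset ℕ) : Lam.freshVar s ∉ s := by
  intro h
  have := Finset.le_sup (f := id) h
  simp only [Lam.freshVar, id] at this
  omega

theorem SL_fv_substF (M : Lam) : ∀ σ : ℕ → Lam,
    (M.substF σ).fv = M.fv.biUnion fun z => (σ z).fv := by
  induction M with
  | var x => intro σ; simp [Lam.substF, Lam.fv]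
  | app M N ihM ihN =>
    intro σ
    simp only [Lam.substF, Lam.fv, ihM, ihN, Finset.union_biUnion]
  | lam x M ih =>
    intro σ
    simp only [Lam.substF, Lam.fv, ih]
    have hf := SL_fresh ((M.fv.erase x).biUnion fun z => (σ z).fv)
    generalize Lam.freshVar ((M.fv.erase x).biUnion fun z => (σ z).fv) = y at hf ⊢
    ext w
    simp only [Finset.mem_erase, Finset.mem_biUnion, not_exists, not_and] at hf ⊢
    constructor
    · rintro ⟨hw, z, hz, hwz⟩
      by_cases hzx : z = x
      · subst hzx
        simp [Lam.fv, hw] at hwz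
      · rw [Function.update_of_ne hzx] at hwz
        exact ⟨z, ⟨hzx, hz⟩, hwz⟩
    · rintro ⟨z, ⟨hzx, hz⟩, hwz⟩
      refine ⟨?_, z, hz, by rwa [Function.update_of_ne hzx]⟩
      rintro rfl
      exact hf z ⟨hzx, hz⟩ hwz

theorem SLD.subst {M : Lam} : ∀ {E E' : ℕ → Finset ℕ} {Γ H β} {σ : ℕ → Lam},
    SLD M E Γ β → (∀ z ∈ M.fv, (σ z).fv.biUnion E' = E z) →
    SLSb (fun z => SLD (σ z) E') Γ H → SLD (M.substF σ) E' H β := by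
  induction M with
  | var x =>
    intro E E' Γ H β σ h _ hS
    simp only [SLD] at h
    generalize hΓ : Γ = Γ' at hS
    cases hS with
    | nil =>
      have := DFunLike.congr_fun (h.symm.trans hΓ) x
      simp at this
    | @cons z α G Γ' H h1 hS =>
      rw [h] at hΓ
      have hz : z = x := by
        by_contra hz
        have := DFunLike.congr_fun hΓ z
        simp [Finsupp.single_apply, Ne.symm hz] at this
      subst hz
      have h2 := DFunLike.congr_fun hΓ z
      have hc : β = α := by
        have : α ∈ (Finsupp.single z {β} : TEnv) z := by rw [h2]; simp
        rw [Finsupp.single_eq_same, Multiset.mem_singleton] at this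
        exact this.symm
      subst hc
      have h0 : Γ' = 0 := by
        have := add_left_cancel ((add_zero _).trans hΓ)
        exact this.symm
      rw [hS.eq_zero h0, add_zero]
      exact h1
  | app M N ihM ihN =>
    intro E E' Γ H β σ h hE hS
    have hM : ∀ z ∈ M.fv, (σ z).fv.biUnion E' = E z := fun z hz => hE z (by simp [Lam.fv, hz])
    have hN : ∀ z ∈ N.fv, (σ z).fv.biUnion E' = E z := fun z hz => hE z (by simp [Lam.fv, hz])
    obtain ⟨Γ₀, Γ₁, rfl, h⟩ := h
    obtain ⟨H₀, H₁, rfl, hS₀, hS₁⟩ := hS.split _ _ rfl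
    refine ⟨H₀, H₁, rfl, ?_⟩
    obtain ⟨h, h0⟩ | ⟨α, l, h, hb⟩ := h
    · refine .inl ⟨?_, hS₁.eq_zero h0⟩
      rw [SL_fv_substF, Finset.biUnion_biUnion, Finset.biUnion_congr rfl hN]
      exact ihM h hM hS₀
    · refine .inr ⟨α, l, ihM h hM hS₀, ?_⟩
      clear h hS hS₀
      generalize (MTy.mk α l).toM = m at hb ⊢
      induction hb generalizing H₁ with
      | nil => rw [hS₁.eq_zero rfl]; exact .nil
      | cons h1 _ ih =>
        obtain ⟨K₀, K₁, rfl, a, b⟩ := hS₁.split _ _ rfl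
        exact .cons (ihN h1 hN a) (ih _ b)
  | lam x M ih =>
    intro E E' Γ H β σ h hE hS
    obtain ⟨hx, h0, h⟩ := h
    simp only [Lam.substF]
    have hf := SL_fresh ((M.fv.erase x).biUnion fun z => (σ z).fv)
    generalize Lam.freshVar ((M.fv.erase x).biUnion fun z => (σ z).fv) = y at hf ⊢
    simp only [Finset.mem_erase, Finset.mem_biUnion, not_exists, not_and] at hf
    have hE' : ∀ X, ∀ z ∈ M.fv, ((Function.update σ x (.var y)) z).fv.biUnion
        (Function.update E' y X) = Function.update E x X z := by
      intro X z hz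
      by_cases hzx : z = x
      · subst hzx; simp [Lam.fv]
      · rw [Function.update_of_ne hzx, Function.update_of_ne hzx, ← hE z (by simp [Lam.fv, hz, hzx])]
        refine Finset.biUnion_congr rfl fun w hw => ?_
        rw [Function.update_of_ne]
        rintro rfl
        exact hf z ⟨hzx, hz⟩ hw
    have hΓ : ∀ z, Γ z ≠ 0 → z ≠ x ∧ z ∈ M.fv := by
      intro z hz
      have hzx : z ≠ x := by rintro rfl; exact hz h0
      refine ⟨hzx, ?_⟩
      by_contra hzM
      obtain ⟨X, β, rfl, h⟩ | ⟨X, α, l, β, rfl, h⟩ := h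
      · exact hz (h.supp hzM)
      · have := h.supp hzM
        simp [hz] at this
    have hH : H y = 0 := hS.zero fun z G α hz h => h.supp (hf z (hΓ z hz))
    have hS' : ∀ X, SLSb (fun z => SLD (Function.update σ x (.var y) z)
        (Function.update E' y X)) Γ H := by
      intro X
      refine hS.imp fun z G α hz h => ?_
      rw [Function.update_of_ne (hΓ z hz).1]
      refine h.congr fun w hw => ?_
      rw [Function.update_of_ne]
      rintro rfl
      exact hf z (hΓ z hz) hw
    refine ⟨?_, hH, ?_⟩
    · rw [SL_fv_substF, Finset.mem_biUnion]
      exact ⟨x, hx, by simp [Lam.fv]⟩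
    obtain ⟨X, β, rfl, h⟩ | ⟨X, α, l, β, rfl, h⟩ := h
    · exact .inl ⟨X, β, rfl, ih h (hE' X) (hS' X)⟩
    · refine .inr ⟨X, α, l, β, rfl, ih h (hE' X) ((hS' X).add (SLSb.of_bag ?_))⟩
      generalize (MTy.mk α l).toM = m
      induction m using Multiset.induction with
      | empty => simpa using SLBag.nil
      | cons a m ih =>
        rw [← Multiset.singleton_add, Finsupp.single_add, Multiset.singleton_add]
        exact .cons (by simp [SLD]) ih

/-- `Δ` agrees with the total environment `E`. -/
def SLAgree (E : ℕ → Finset ℕ) (Δ : VEnv) : Prop :=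
  ∀ z X, Δ.lookup z = some X → E z = X

theorem SL_uni {E : ℕ → Finset ℕ} {Δ : VEnv} (h : SLAgree E Δ) :
    Δ.uni = Δ.keys.biUnion E := by
  refine Finset.biUnion_congr rfl fun z hz => ?_
  obtain ⟨X, hX⟩ := Finmap.mem_iff.1 (Finmap.mem_keys.1 hz)
  rw [hX, h z X hX]
  rfl

theorem SL_union {E : ℕ → Finset ℕ} {Δ₀ Δ₁ : VEnv} (hc : VEnv.Coh Δ₀ Δ₁)
    (h : SLAgree E (Δ₀ ∪ Δ₁)) : SLAgree E Δ₀ ∧ SLAgree E Δ₁ := by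
  constructor
  · intro z X hz
    refine h z X ?_
    rw [Finmap.lookup_union_left (Finmap.mem_of_lookup_eq_some hz), hz]
  · intro z X hz
    refine h z X ?_
    by_cases h0 : z ∈ Δ₀
    · rw [Finmap.lookup_union_left h0, hc z h0 (Finmap.mem_of_lookup_eq_some hz), hz]
    · rw [Finmap.lookup_union_right h0, hz]

theorem SL_bag_of {N : Lam}
    (ih : ∀ {Γ Δ α}, Der Γ Δ N (.simple α) → Δ.keys = N.fv ∧
      ∀ E, SLAgree E Δ → SLD N E Γ α) (l : List STy) :
    ∀ {Γ Δ α}, DerB Γ Δ N (.mk α l) → Δ.keys = N.fv ∧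
      ∀ E, SLAgree E Δ → SLBag (SLD N E) Γ (MTy.mk α l).toM := by
  induction l with
  | nil =>
    intro Γ Δ α h
    cases h with
    | one h =>
      refine ⟨(ih h).1, fun E hE => ?_⟩
      have := SLBag.cons ((ih h).2 E hE) SLBag.nil
      rwa [add_zero] at this
  | cons a l ihl =>
    intro Γ Δ α h
    cases h with
    | cons h hb =>
      refine ⟨(ih h).1, fun E hE => ?_⟩
      exact SLBag.cons ((ih h).2 E hE) ((ihl hb).2 E hE)

theorem SLD.of_der {M : Lam} : ∀ {Γ Δ β}, Der Γ Δ M (.simple β) → Δ.keys = M.fv ∧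
    ∀ E, SLAgree E Δ → SLD M E Γ β := by
  induction M with
  | var x =>
    intro Γ Δ β h
    cases h with
    | ax _ _ X => exact ⟨by simp [Lam.fv], fun E _ => rfl⟩
  | app M N ihM ihN =>
    intro Γ Δ β h
    cases h with
    | @app Γ₀ Γ₁ Δ₀ Δ₁ _ _ m _ h hb hc =>
      cases m with
      | empty X =>
        cases hb with
        | bang0 hk =>
          refine ⟨by rw [Finmap.keys_union, (ihM h).1, hk]; rfl, fun E hE => ?_⟩
          have hE := SL_union hc hE
          refine ⟨Γ₀, 0, rfl, .inl ⟨?_, rfl⟩⟩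
          rw [← hk, ← SL_uni hE.2]
          exact (ihM h).2 E hE.1
      | mk α l =>
        have hb := SL_bag_of ihN l hb
        refine ⟨by rw [Finmap.keys_union, (ihM h).1, hb.1]; rfl, fun E hE => ?_⟩
        have hE := SL_union hc hE
        exact ⟨Γ₀, Γ₁, rfl, .inr ⟨α, l, (ihM h).2 E hE.1, hb.2 E hE.2⟩⟩
  | lam x M ih =>
    intro Γ Δ β h
    have hA : ∀ {E X}, SLAgree E Δ → SLAgree (Function.update E x X) (Δ.insert x X) := by
      intro E X hE z Y hz
      by_cases hzx : z = x
      · subst hzx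
        rw [Finmap.lookup_insert] at hz
        simpa using hz
      · rw [Finmap.lookup_insert_of_ne _ hzx] at hz
        rw [Function.update_of_ne hzx]
        exact hE z Y hz
    have hK : ∀ {X : Finset ℕ}, x ∉ Δ → (Δ.insert x X).keys = M.fv → x ∈ M.fv ∧ Δ.keys = M.fv.erase x := by
      intro X hx hk
      rw [← hk]
      refine ⟨by simp [Finmap.mem_keys], ?_⟩
      ext z
      simp only [Finmap.mem_keys, Finset.mem_erase, Finmap.mem_insert]
      constructor
      · intro hz
        exact ⟨by rintro rfl; exact hx hz, .inr hz⟩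
      · rintro ⟨h1, h2⟩
        exact h2.resolve_left h1
    cases h with
    | lam0 h0 hx h =>
      have := hK hx (ih h).1
      exact ⟨this.2, fun E hE => ⟨this.1, h0, .inl ⟨_, _, rfl, (ih h).2 _ (hA hE)⟩⟩⟩
    | lamP h0 hx h =>
      have := hK hx (ih h).1
      exact ⟨this.2, fun E hE => ⟨this.1, h0, .inr ⟨_, _, _, _, rfl, (ih h).2 _ (hA hE)⟩⟩⟩

theorem SL_restr (E : ℕ → Finset ℕ) (S : Finset ℕ) :
    ∃ Δ : VEnv, Δ.keys = S ∧ SLAgree E Δ := by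
  induction S using Finset.induction_on with
  | empty => exact ⟨∅, by simp, by intro z X h; simp at h⟩
  | insert a s _ ih =>
    obtain ⟨Δ, h1, h2⟩ := ih
    refine ⟨Δ.insert a (E a), ?_, ?_⟩
    · rw [← h1]
      ext z
      simp [Finmap.mem_keys]
    · intro z X hz
      by_cases hza : z = a
      · subst hza
        rw [Finmap.lookup_insert] at hz
        simpa using hz
      · rw [Finmap.lookup_insert_of_ne _ hza] at hz
        exact h2 z X hz

theorem SL_ext {E : ℕ → Finset ℕ} {Δ Δ' : VEnv} (h : SLAgree E Δ) (h' : SLAgree E Δ')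
    (hk : Δ.keys = Δ'.keys) : Δ = Δ' := by
  refine Finmap.ext_lookup fun z => ?_
  by_cases hz : z ∈ Δ
  · have hz' : z ∈ Δ' := by rwa [← Finmap.mem_keys, ← hk, Finmap.mem_keys]
    obtain ⟨X, hX⟩ := Finmap.mem_iff.1 hz
    obtain ⟨X', hX'⟩ := Finmap.mem_iff.1 hz'
    rw [hX, hX', ← h z X hX, ← h' z X' hX']
  · have hz' : z ∉ Δ' := by rwa [← Finmap.mem_keys, ← hk, Finmap.mem_keys]
    rw [Finmap.lookup_eq_none.2 hz, Finmap.lookup_eq_none.2 hz']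

theorem SL_agree_union {E : ℕ → Finset ℕ} {Δ Δ' : VEnv} (h : SLAgree E Δ) (h' : SLAgree E Δ') :
    SLAgree E (Δ ∪ Δ') := by
  intro z X hz
  by_cases h0 : z ∈ Δ
  · rw [Finmap.lookup_union_left h0] at hz
    exact h z X hz
  · rw [Finmap.lookup_union_right h0] at hz
    exact h' z X hz

theorem SL_agree_coh {E : ℕ → Finset ℕ} {Δ Δ' : VEnv} (h : SLAgree E Δ) (h' : SLAgree E Δ') :
    VEnv.Coh Δ Δ' := by
  intro z hz hz'
  obtain ⟨X, hX⟩ := Finmap.mem_iff.1 hz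
  obtain ⟨X', hX'⟩ := Finmap.mem_iff.1 hz'
  rw [hX, hX', ← h z X hX, ← h' z X' hX']

theorem SL_derB {N : Lam} {E Δ} (ih : ∀ {Γ α}, SLD N E Γ α → Der Γ Δ N (.simple α)) (l : List STy) :
    ∀ {Γ α}, SLBag (SLD N E) Γ (MTy.mk α l).toM → DerB Γ Δ N (.mk α l) := by
  have perm : ∀ {Γ m}, SLBag (SLD N E) Γ m → ∀ α m', m = α ::ₘ m' →
      ∃ G H, Γ = G + H ∧ SLD N E G α ∧ SLBag (SLD N E) H m' := by
    intro Γ m hb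
    induction hb with
    | nil => intro α m' h; simp at h
    | @cons G H a m h1 hb ihb =>
      intro α m' h
      rcases Multiset.cons_eq_cons.1 h with ⟨rfl, rfl⟩ | ⟨_, cs, rfl, rfl⟩
      · exact ⟨G, H, rfl, h1, hb⟩
      · obtain ⟨G', H', rfl, a1, a2⟩ := ihb _ _ rfl
        exact ⟨G', G + H', by rw [add_left_comm], a1, .cons h1 a2⟩
  induction l with
  | nil =>
    intro Γ α h
    obtain ⟨G, H, rfl, a1, a2⟩ := perm h α 0 (by simp [MTy.toM])
    have : H = 0 := by
      generalize hm : (0 : Multiset STy) = m at a2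
      cases a2 with
      | nil => rfl
      | cons => simp at hm
    subst this
    rw [add_zero]
    exact .one (ih a1)
  | cons a l ihl =>
    intro Γ α h
    obtain ⟨G, H, rfl, a1, a2⟩ := perm h α (MTy.mk a l).toM (by simp [MTy.toM])
    exact .cons (ih a1) (ihl a2)

theorem SLD.der {M : Lam} : ∀ {E Γ Δ β}, SLD M E Γ β → Δ.keys = M.fv → SLAgree E Δ →
    Der Γ Δ M (.simple β) := by
  induction M with
  | var x =>
    intro E Γ Δ β h hk hE
    simp only [SLD] at h
    subst h
    have : Δ = Finmap.singleton x (E x) := by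
      refine SL_ext hE ?_ (by rw [hk]; simp [Lam.fv])
      intro z X hz
      have hzx : z = x := by
        have := Finmap.mem_of_lookup_eq_some hz
        simpa using this
      subst hzx
      rw [Finmap.lookup_singleton_eq] at hz
      simpa using hz
    rw [this]
    exact .ax _ _ _
  | app M N ihM ihN =>
    intro E Γ Δ β h hk hE
    obtain ⟨Δ₀, k0, e0⟩ := SL_restr E M.fv
    obtain ⟨Δ₁, k1, e1⟩ := SL_restr E N.fv
    have : Δ = Δ₀ ∪ Δ₁ := SL_ext hE (SL_agree_union e0 e1) (by rw [hk, Finmap.keys_union, k0, k1]; rfl)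
    subst this
    have hc := SL_agree_coh e0 e1
    obtain ⟨Γ₀, Γ₁, rfl, ⟨h, rfl⟩ | ⟨α, l, h, hb⟩⟩ := h
    · rw [← k1, ← SL_uni e1] at h
      exact .app (m := .empty _) (ihM h k0 e0) (.bang0 k1) hc
    · exact .app (m := .mk α l) (ihM h k0 e0) (SL_derB (fun h => ihN h k1 e1) l hb) hc
  | lam x M ih =>
    intro E Γ Δ β h hk hE
    obtain ⟨hx, h0, h⟩ := h
    have hxΔ : x ∉ Δ := by
      rw [← Finmap.mem_keys, hk]
      simp [Lam.fv]
    have hk' : ∀ X : Finset ℕ, (Δ.insert x X).keys = M.fv := by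
      intro X
      ext z
      have hz : z ∈ Δ ↔ z ∈ M.fv.erase x := by rw [← Finmap.mem_keys, hk]; rfl
      rw [Finmap.mem_keys, Finmap.mem_insert, hz, Finset.mem_erase]
      by_cases hzx : z = x
      · simp [hzx, hx]
      · simp [hzx]
    have hA : ∀ X, SLAgree (Function.update E x X) (Δ.insert x X) := by
      intro X z Y hz
      by_cases hzx : z = x
      · subst hzx
        rw [Finmap.lookup_insert] at hz
        simpa using hz
      · rw [Finmap.lookup_insert_of_ne _ hzx] at hz
        rw [Function.update_of_ne hzx]
        exact hE z Y hz
    obtain ⟨X, β, rfl, h⟩ | ⟨X, α, l, β, rfl, h⟩ := h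
    · exact .lam0 h0 hxΔ (ih h (hk' X) (hA X))
    · exact .lamP h0 hxΔ (ih h (hk' X) (hA X))

/-- Forward Substitution Lemma, case 2.
The non-empty multiset type `ᾱ` is `MTy.mk α₀ l`. -/
theorem stmt2 (Γ Γ' : TEnv) (Δ Δ' : VEnv) (M N : Lam) (x : ℕ) (β α₀ : STy)
    (l : List STy) (hM : M.IsI) (hN : N.IsI)
    (hxΓ : Γ x = 0) (hxΔ : x ∉ Δ) (hcoh : VEnv.Coh Δ Δ')
    (h1 : Der (Γ + Finsupp.single x (MTy.mk α₀ l).toM)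
      (Δ.insert x (VEnv.uni Δ')) M (.simple β))
    (h2 : DerB Γ' Δ' N (.mk α₀ l)) :
    Der (Γ + Γ') (Δ ∪ Δ') (M.subst x N) (.simple β) := by
  obtain ⟨k1, d1⟩ := SLD.of_der h1
  obtain ⟨k2, d2⟩ := SL_bag_of SLD.of_der l h2
  let E : ℕ → Finset ℕ := fun z => ((Δ ∪ Δ').lookup z).getD ∅
  have hE : SLAgree E (Δ ∪ Δ') := by
    intro z X hz
    simp only [E, hz, Option.getD_some]
  obtain ⟨eΔ, eΔ'⟩ := SL_union hcoh hE
  have hmem : ∀ z, z ∈ M.fv ↔ z = x ∨ z ∈ Δ := by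
    intro z
    rw [← k1, Finmap.mem_keys, Finmap.mem_insert]
  have hxM : x ∈ M.fv := (hmem x).2 (.inl rfl)
  have D1 := d1 (Function.update E x (VEnv.uni Δ')) (by
    intro z Y hz
    by_cases hzx : z = x
    · subst hzx
      rw [Finmap.lookup_insert] at hz
      simpa using hz
    · rw [Finmap.lookup_insert_of_ne _ hzx] at hz
      rw [Function.update_of_ne hzx]
      exact eΔ z Y hz)
  have D2 := d2 E eΔ'
  have hS : SLSb (fun z => SLD ((fun z => if z = x then N else Lam.var z) z) E)
      (Γ + Finsupp.single x (MTy.mk α₀ l).toM) (Γ + Γ') := by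
    refine (SLSb.vars Γ ?_).add (SLSb.of_bag ?_)
    · intro z α hz
      have hzx : z ≠ x := by rintro rfl; exact hz hxΓ
      simp [hzx, SLD]
    · simpa using D2
  refine SLD.der (E := E) (SLD.subst D1 ?_ hS) ?_ hE
  · intro z hz
    by_cases hzx : z = x
    · subst hzx
      simp [SL_uni eΔ', k2]
    · simp [hzx, Lam.fv]
  · rw [Lam.subst, SL_fv_substF, Finmap.keys_union, k2]
    ext w
    simp only [Finset.mem_union, Finset.mem_biUnion, Finmap.mem_keys]
    constructor
    · rintro (hw | hw)
      · have hwx : w ≠ x := by rintro rfl; exact hxΔ hw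
        exact ⟨w, (hmem w).2 (.inr hw), by simp [hwx, Lam.fv]⟩
      · exact ⟨x, hxM, by simpa using hw⟩
    · rintro ⟨z, hz, hw⟩
      by_cases hzx : z = x
      · right; simpa [hzx] using hw
      · left
        simp only [hzx, if_false, Lam.fv, Finset.mem_singleton] at hw
        subst hw
        exact ((hmem w).1 hz).resolve_left hzx
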